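/- arXiv:math/9907207 — 2 statements merged into one kernel-verified Lean document; each statement's English description precedes it below -/
import Mathlib

section
/- Let R be a ring and n a natural number. Let K and L be cochain double complexes of R-modules (with differentials of degree +1 in both directions) such that K^{p,q} = 0 and L^{p,q} = 0 whenever p < 0 or p > n, and let φ : K → L be a morphism of double complexes. If for every p and every q the map induced by φ on the vertical cohomology of the p-th columns, H^q(K^{p,•}) → H^q(L^{p,•}), is an isomorphism, then the induced morphism of total complexes Tot(K) → Tot(L) is a quasi-isomorphism, i.e. induces an isomorphism on cohomology in every degree. -/
open CategoryTheory Limits HomologicalComplex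

namespace TotQI

universe v u

variable {C : Type u} [Category.{v} C] [Abelian C]

/-- Refinement form of acyclicity of the mapping cone of `φ`. -/
def Acyc {K L : CochainComplex C ℤ} (φ : K ⟶ L) : Prop :=
  ∀ (i j k l : ℤ) (_ : i + 1 = j) (_ : j + 1 = k) (_ : k + 1 = l) (A : C)
    (x : A ⟶ K.X k) (y : A ⟶ L.X j), x ≫ K.d k l = 0 → x ≫ φ.f k = y ≫ L.d j k →
    ∃ (A' : C) (π : A' ⟶ A) (_ : Epi π) (x' : A' ⟶ K.X j) (y' : A' ⟶ L.X i),
      π ≫ x = x' ≫ K.d j k ∧ π ≫ y = x' ≫ φ.f j + y' ≫ L.d i j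

lemma acyc_of_quasiIso {K L : CochainComplex C ℤ} (φ : K ⟶ L) [QuasiIso φ] : Acyc φ := by
  intro i j k l hi hj hk A x y hx hxy
  have hm : Mono (homologyMap φ k) := inferInstance
  have he : Epi (homologyMap φ j) := inferInstance
  rw [mono_homologyMap_iff_up_to_refinements φ j k l
    (ComplexShape.prev_eq' _ hj) (ComplexShape.next_eq' _ hk)] at hm
  rw [epi_homologyMap_iff_up_to_refinements φ i j k
    (ComplexShape.prev_eq' _ hi) (ComplexShape.next_eq' _ hj)] at he
  obtain ⟨A₁, π₁, h₁, w, hw⟩ := hm x hx y hxy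
  obtain ⟨A₂, π₂, h₂, u, hu, v, hv⟩ := he (π₁ ≫ y - w ≫ φ.f j) (by
    rw [Preadditive.sub_comp, Category.assoc, Category.assoc, ← hxy, Hom.comm,
      ← Category.assoc, ← Category.assoc, hw, sub_self])
  refine ⟨A₂, π₂ ≫ π₁, inferInstance, π₂ ≫ w + u, v, ?_, ?_⟩
  · simp [hw, hu]
  · rw [Preadditive.comp_sub] at hv
    rw [Category.assoc, sub_eq_iff_eq_add.1 hv]
    simp only [Preadditive.add_comp, Category.assoc]
    abel

lemma quasiIso_of_acyc {K L : CochainComplex C ℤ} (φ : K ⟶ L) (h : Acyc φ) : QuasiIso φ := by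
  rw [quasiIso_iff]
  intro m
  rw [quasiIsoAt_iff_isIso_homologyMap]
  have hm : Mono (homologyMap φ m) := by
    rw [mono_homologyMap_iff_up_to_refinements φ (m - 1) m (m + 1) (by simp) (by simp)]
    intro A x hx y hxy
    obtain ⟨A', π, hπ, x', y', h₁, h₂⟩ :=
      h (m - 1 - 1) (m - 1) m (m + 1) (by omega) (by omega) rfl A x y hx hxy
    exact ⟨A', π, hπ, x', h₁⟩
  have he : Epi (homologyMap φ m) := by
    rw [epi_homologyMap_iff_up_to_refinements φ (m - 1) m (m + 1) (by simp) (by simp)]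
    intro A y hy
    obtain ⟨A', π, hπ, x', y', h₁, h₂⟩ :=
      h (m - 1) m (m + 1) (m + 1 + 1) (by omega) (by omega) rfl A 0 y (by simp) (by simp [hy])
    exact ⟨A', π, hπ, x', by simpa using h₁.symm, y', h₂⟩
  exact isIso_of_mono_of_epi _

abbrev Bi (C : Type u) [Category.{v} C] [Abelian C] :=
  HomologicalComplex₂ C (ComplexShape.up ℤ) (ComplexShape.up ℤ)

variable (K L : Bi C) [K.HasTotal (ComplexShape.up ℤ)] [L.HasTotal (ComplexShape.up ℤ)]

noncomputable abbrev T : CochainComplex C ℤ := K.total (ComplexShape.up ℤ)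

noncomputable def inc (p q m : ℤ) (h : p + q = m) : (K.X p).X q ⟶ (T K).X m :=
  K.ιTotal (ComplexShape.up ℤ) p q m h

noncomputable def proj (p q m : ℤ) (h : p + q = m) : (T K).X m ⟶ (K.X p).X q :=
  K.totalDesc (fun i₁ i₂ hi =>
    if h₁ : i₁ = p then (K.XXIsoOfEq _ _ _ h₁
      (by have hi' : i₁ + i₂ = m := hi
          omega : i₂ = q)).hom else 0)

lemma inc_proj_self (p q m : ℤ) (h : p + q = m) :
    inc K p q m h ≫ proj K p q m h = 𝟙 _ := by
  simp [inc, proj]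

lemma inc_proj_ne (p q m : ℤ) (h : p + q = m) (p' q' : ℤ) (h' : p' + q' = m) (hp : p ≠ p') :
    inc K p q m h ≫ proj K p' q' m h' = 0 := by
  simp [inc, proj, hp]

lemma inc_proj_self_assoc (p q m : ℤ) (h : p + q = m) {Z : C} (f : (K.X p).X q ⟶ Z) :
    inc K p q m h ≫ proj K p q m h ≫ f = f := by
  rw [← Category.assoc, inc_proj_self, Category.id_comp]

lemma inc_proj_ne_assoc (p q m : ℤ) (h : p + q = m) (p' q' : ℤ) (h' : p' + q' = m)
    (hp : p ≠ p') {Z : C} (f : (K.X p').X q' ⟶ Z) :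
    inc K p q m h ≫ proj K p' q' m h' ≫ f = 0 ≫ f := by
  rw [← Category.assoc, inc_proj_ne K p q m h p' q' h' hp]

lemma tot_ext {A : C} {m : ℤ} {f g : (T K).X m ⟶ A}
    (h : ∀ (p q : ℤ) (h : p + q = m), inc K p q m h ≫ f = inc K p q m h ≫ g) : f = g :=
  HomologicalComplex₂.total.hom_ext _ (fun p q hpq => h p q hpq)

lemma inc_d (p q m m' : ℤ) (h : p + q = m) (hm : m + 1 = m') (p' q' : ℤ)
    (hp : p + 1 = p') (hq : q + 1 = q') :
    inc K p q m h ≫ (T K).d m m' = (K.d p p').f q ≫ inc K p' q m' (by omega) +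
      p.negOnePow • ((K.X p).d q q' ≫ inc K p q' m' (by omega)) := by
  simp only [inc, T, HomologicalComplex₂.total_d, Preadditive.comp_add,
    HomologicalComplex₂.ι_D₁, HomologicalComplex₂.ι_D₂]
  rw [K.d₁_eq (ComplexShape.up ℤ) (show (ComplexShape.up ℤ).Rel p p' from hp) q m'
    (by change p' + q = m'; omega),
    K.d₂_eq (ComplexShape.up ℤ) p (show (ComplexShape.up ℤ).Rel q q' from hq) m'
    (by change p + q' = m'; omega)]
  simp

lemma d_proj (m m' : ℤ) (hm : m + 1 = m') (p₀ p q q' : ℤ) (hp : p₀ + 1 = p) (hq : q + 1 = q')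
    (h : p + q' = m') :
    (T K).d m m' ≫ proj K p q' m' h =
      p.negOnePow • (proj K p q m (by omega) ≫ (K.X p).d q q') +
        proj K p₀ q' m (by omega) ≫ (K.d p₀ p).f q' := by
  apply tot_ext
  intro a b hab
  rw [← Category.assoc, inc_d K a b m m' hab hm (a + 1) (b + 1) rfl rfl]
  simp only [Preadditive.add_comp, Preadditive.comp_add, Linear.units_smul_comp,
    Linear.comp_units_smul, Category.assoc]
  by_cases h₁ : a = p
  · subst h₁
    obtain rfl : b = q := by omega
    obtain rfl : b + 1 = q' := by omega
    rw [inc_proj_ne K _ _ _ _ _ _ _ (by omega), inc_proj_self, inc_proj_self_assoc,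
      inc_proj_ne_assoc K _ _ _ _ _ _ _ (by omega)]
    simp
  · by_cases h₂ : a = p₀
    · subst h₂
      subst hp
      obtain rfl : b = q' := by omega
      rw [inc_proj_self, inc_proj_self_assoc,
        inc_proj_ne K _ _ _ _ _ _ _ (by omega), inc_proj_ne_assoc K _ _ _ _ _ _ _ (by omega)]
      simp
    · rw [inc_proj_ne K _ _ _ _ _ _ _ (by omega), inc_proj_ne K _ _ _ _ _ _ _ (by omega),
        inc_proj_ne_assoc K _ _ _ _ _ _ _ (by omega),
        inc_proj_ne_assoc K _ _ _ _ _ _ _ (by omega)]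
      simp

variable {K L} (φ : K ⟶ L)

noncomputable abbrev Tm : T K ⟶ T L := HomologicalComplex₂.total.map φ (ComplexShape.up ℤ)

lemma inc_map (p q m : ℤ) (h : p + q = m) :
    inc K p q m h ≫ (Tm φ).f m = (φ.f p).f q ≫ inc L p q m h := by
  simp [inc, Tm]

lemma map_proj (p q m : ℤ) (h : p + q = m) :
    (Tm φ).f m ≫ proj L p q m h = proj K p q m h ≫ (φ.f p).f q := by
  apply tot_ext
  intro a b hab
  rw [← Category.assoc, inc_map, Category.assoc]
  by_cases h₁ : a = p
  · subst h₁
    obtain rfl : b = q := by omega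
    rw [inc_proj_self, inc_proj_self_assoc]
    simp
  · rw [inc_proj_ne L _ _ _ _ _ _ _ h₁,
      inc_proj_ne_assoc K _ _ _ _ _ _ _ h₁]
    simp

/-- The morphism `x` lands in the `p`-th step of the column filtration. -/
def InF (K : Bi C) [K.HasTotal (ComplexShape.up ℤ)] (p : ℤ) {A : C} {m : ℤ}
    (x : A ⟶ (T K).X m) : Prop :=
  ∀ (a b : ℤ) (h : a + b = m), a < p → x ≫ proj K a b m h = 0

lemma eq_zero_of_inF (n : ℕ) (hK : ∀ p q : ℤ, (p < 0 ∨ (n : ℤ) < p) → IsZero ((K.X p).X q))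
    {A : C} {m : ℤ} (x : A ⟶ (T K).X m) (hx : InF K (n + 1) x) : x = 0 := by
  have key : 𝟙 ((T K).X m) = ∑ p ∈ Finset.Icc (0 : ℤ) n,
      proj K p (m - p) m (by omega) ≫ inc K p (m - p) m (by omega) := by
    apply tot_ext
    intro a b hab
    by_cases ha : a < 0 ∨ (n : ℤ) < a
    · exact (hK a b ha).eq_of_src _ _
    · obtain rfl : b = m - a := by omega
      rw [Preadditive.comp_sum, Finset.sum_eq_single a]
      · rw [inc_proj_self_assoc, Category.comp_id]
      · intro c _ hc
        rw [inc_proj_ne_assoc K _ _ _ _ _ _ _ (Ne.symm hc), zero_comp]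
      · intro h
        exfalso
        apply h
        rw [Finset.mem_Icc]
        omega
  rw [← Category.comp_id x, key, Preadditive.comp_sum]
  apply Finset.sum_eq_zero
  intro p hp
  rw [Finset.mem_Icc] at hp
  rw [← Category.assoc, hx p (m - p) _ (by omega), zero_comp]

/-- Acyclicity of the cone, restricted to the `p`-th filtration step. -/
def P (p : ℤ) : Prop :=
  ∀ (i j k l : ℤ) (_ : i + 1 = j) (_ : j + 1 = k) (_ : k + 1 = l) (A : C)
    (x : A ⟶ (T K).X k) (y : A ⟶ (T L).X j), InF K p x → InF L p y →
    x ≫ (T K).d k l = 0 → x ≫ (Tm φ).f k = y ≫ (T L).d j k →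
    ∃ (A' : C) (π : A' ⟶ A) (_ : Epi π) (x' : A' ⟶ (T K).X j) (y' : A' ⟶ (T L).X i),
      π ≫ x = x' ≫ (T K).d j k ∧ π ≫ y = x' ≫ (Tm φ).f j + y' ≫ (T L).d i j

/-- the differential of an element of column `p`, seen in filtration step `p + 1` modulo. -/
lemma inc_d_proj_self (p q q' m m' : ℤ) (h : p + q = m) (hm : m + 1 = m') (hq : q + 1 = q')
    (h' : p + q' = m') :
    inc K p q m h ≫ (T K).d m m' ≫ proj K p q' m' h' = p.negOnePow • (K.X p).d q q' := by
  rw [d_proj K m m' hm (p - 1) p q q' (by omega) hq, Preadditive.comp_add,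
    inc_proj_ne_assoc K _ _ _ _ _ _ _ (by omega), Linear.comp_units_smul, inc_proj_self_assoc]
  simp

lemma inc_d_proj_lt (p q a b m m' : ℤ) (h : p + q = m) (hm : m + 1 = m')
    (h' : a + b = m') (hap : a < p) :
    inc K p q m h ≫ (T K).d m m' ≫ proj K a b m' h' = 0 := by
  rw [d_proj K m m' hm (a - 1) a (b - 1) b (by omega) (by omega), Preadditive.comp_add,
    inc_proj_ne_assoc K _ _ _ _ _ _ _ (by omega), Linear.comp_units_smul,
    inc_proj_ne_assoc K _ _ _ _ _ _ _ (by omega)]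
  simp

lemma inF_comp_d_proj (p q q' m m' : ℤ) (hm : m + 1 = m') (hq : q + 1 = q')
    (h' : p + q' = m') {A : C} (x : A ⟶ (T K).X m) (hx : InF K p x) :
    x ≫ (T K).d m m' ≫ proj K p q' m' h' =
      p.negOnePow • (x ≫ proj K p q m (by omega) ≫ (K.X p).d q q') := by
  rw [d_proj K m m' hm (p - 1) p q q' (by omega) hq, Preadditive.comp_add,
    ← Category.assoc x (proj K (p - 1) _ _ _), hx _ _ _ (by omega), Linear.comp_units_smul]
  simp

lemma P_step (p : ℤ) (hφ : Acyc (φ.f p)) (hP : P φ (p + 1)) : P φ p := by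
  intro i j k l hi hj hk A x y hFx hFy hx hxy
  have hx₁ : (x ≫ proj K p (k - p) k (by omega)) ≫ (K.X p).d (k - p) (l - p) = 0 := by
    have := inF_comp_d_proj p (k - p) (l - p) k l hk (by omega) (by omega) x hFx
    rw [← Category.assoc, hx, zero_comp] at this
    rw [Category.assoc]
    exact (smul_eq_zero_iff_eq _).1 this.symm
  have hxy₁ : (x ≫ proj K p (k - p) k (by omega)) ≫ (φ.f p).f (k - p) =
      (p.negOnePow • (y ≫ proj L p (j - p) j (by omega))) ≫ (L.X p).d (j - p) (k - p) := by
    have := inF_comp_d_proj p (j - p) (k - p) j k hj (by omega) (by omega) y hFy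
    rw [← Category.assoc, ← hxy, Category.assoc, map_proj] at this
    rw [Category.assoc, this, Linear.units_smul_comp, Category.assoc]
  obtain ⟨A₁, π₁, h₁, u, v, hu, hv⟩ := hφ (i - p) (j - p) (k - p) (l - p) (by omega) (by omega)
    (by omega) A _ _ hx₁ hxy₁
  have hv' : π₁ ≫ y ≫ proj L p (j - p) j (by omega) =
      p.negOnePow • (u ≫ (φ.f p).f (j - p) + v ≫ (L.X p).d (i - p) (j - p)) := by
    rw [← hv, Linear.comp_units_smul, smul_smul, Int.units_mul_self, one_smul]
  obtain ⟨A₂, π₂, h₂, x', y', hx', hy'⟩ := hP i j k l hi hj hk A₁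
    (π₁ ≫ x - (p.negOnePow • (u ≫ inc K p (j - p) j (by omega))) ≫ (T K).d j k)
    (π₁ ≫ y - (p.negOnePow • (u ≫ inc K p (j - p) j (by omega))) ≫ (Tm φ).f j
      - (v ≫ inc L p (i - p) i (by omega)) ≫ (T L).d i j)
    (by
      intro a b hab ha
      by_cases hap : a = p
      · subst hap
        obtain rfl : b = k - a := by omega
        simp only [Preadditive.sub_comp, Category.assoc, Linear.units_smul_comp]
        rw [inc_d_proj_self a (j - a) (k - a) j k _ hj (by omega), hu, Linear.comp_units_smul,
          smul_smul, Int.units_mul_self, one_smul, sub_self]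
      · simp only [Preadditive.sub_comp, Category.assoc, Linear.units_smul_comp]
        rw [inc_d_proj_lt p _ a b j k _ hj hab (by omega), hFx a b hab (by omega)]
        simp)
    (by
      intro a b hab ha
      by_cases hap : a = p
      · subst hap
        obtain rfl : b = j - a := by omega
        simp only [Preadditive.sub_comp, Category.assoc, Linear.units_smul_comp]
        rw [inc_d_proj_self a (i - a) (j - a) i j _ hi (by omega), hv', map_proj,
          inc_proj_self_assoc, Linear.comp_units_smul, smul_add]
        abel
      · simp only [Preadditive.sub_comp, Category.assoc, Linear.units_smul_comp]
        rw [inc_d_proj_lt p _ a b i j _ hi hab (by omega), hFy a b hab (by omega), map_proj,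
          inc_proj_ne_assoc K _ _ _ _ _ _ _ (Ne.symm hap)]
        simp)
    (by simp [hx])
    (by
      simp only [Preadditive.sub_comp, Category.assoc, Hom.comm, hxy, d_comp_d, comp_zero,
        sub_zero])
  refine ⟨A₂, π₂ ≫ π₁, inferInstance,
    x' + π₂ ≫ (p.negOnePow • (u ≫ inc K p (j - p) j (by omega))),
    y' + π₂ ≫ (v ≫ inc L p (i - p) i (by omega)), ?_, ?_⟩
  · rw [Preadditive.comp_sub, sub_eq_iff_eq_add] at hx'
    rw [Category.assoc, hx', Preadditive.add_comp, Category.assoc]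
  · rw [Preadditive.comp_sub, Preadditive.comp_sub, sub_eq_iff_eq_add, sub_eq_iff_eq_add] at hy'
    rw [Category.assoc, hy']
    simp only [Preadditive.add_comp, Category.assoc]
    abel

theorem main (n : ℕ)
    (hK : ∀ p q : ℤ, (p < 0 ∨ (n : ℤ) < p) → IsZero ((K.X p).X q))
    (hL : ∀ p q : ℤ, (p < 0 ∨ (n : ℤ) < p) → IsZero ((L.X p).X q))
    (hφ : ∀ p : ℤ, QuasiIso (φ.f p)) : QuasiIso (Tm φ) := by
  have hP : ∀ r : ℕ, P φ ((n : ℤ) + 1 - r) := by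
    intro r
    induction r with
    | zero =>
      intro i j k l hi hj hk A x y hFx hFy hx hxy
      rw [Nat.cast_zero, sub_zero] at hFx hFy
      obtain rfl := eq_zero_of_inF n hK x hFx
      obtain rfl := eq_zero_of_inF n hL y hFy
      exact ⟨A, 𝟙 A, inferInstance, 0, 0, by simp, by simp⟩
    | succ r ih =>
      apply P_step
      · have := hφ ((n : ℤ) + 1 - (r + 1 : ℕ))
        exact acyc_of_quasiIso _
      · convert ih using 1
        push_cast
        ring
  apply quasiIso_of_acyc
  intro i j k l hi hj hk A x y hx hxy
  have h0 := hP (n + 1)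
  refine h0 i j k l hi hj hk A x y ?_ ?_ hx hxy
  · intro a b hab ha
    exact (hK a b (Or.inl (by push_cast at ha; omega))).eq_of_tgt _ _
  · intro a b hab ha
    exact (hL a b (Or.inl (by push_cast at ha; omega))).eq_of_tgt _ _

end TotQI

theorem stmt11 (R : Type) [Ring R] (n : ℕ)
    (K L : HomologicalComplex₂ (ModuleCat R) (ComplexShape.up ℤ) (ComplexShape.up ℤ))
    [K.HasTotal (ComplexShape.up ℤ)] [L.HasTotal (ComplexShape.up ℤ)]
    (hK : ∀ p q : ℤ, (p < 0 ∨ (n : ℤ) < p) → IsZero ((K.X p).X q))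
    (hL : ∀ p q : ℤ, (p < 0 ∨ (n : ℤ) < p) → IsZero ((L.X p).X q))
    (φ : K ⟶ L)
    (hφ : ∀ p : ℤ, QuasiIso (φ.f p)) :
    QuasiIso (HomologicalComplex₂.total.map φ (ComplexShape.up ℤ)) := by
  exact TotQI.main φ n hK hL hφ
end

section
/- Let d ≥ 1 be an integer. For every smooth function f : ℝ^d → ℂ satisfying f(x + k) = f(x) for all x ∈ ℝ^d and k ∈ ℤ^d and ∫_{[0,1]^d} f(x) dx = 0, there exists a unique smooth function u : ℝ^d → ℂ satisfying u(x + k) = u(x) for all x ∈ ℝ^d and k ∈ ℤ^d, ∫_{[0,1]^d} u(x) dx = 0, and Δu = f, where Δ = Σ_{i=1}^d ∂²/∂x_i² is the Laplacian. -/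
open MeasureTheory

namespace PT

/-- the unit cube -/
abbrev cube (d : ℕ) : Set (Fin d → ℝ) := Set.univ.pi fun _ : Fin d => Set.Icc (0 : ℝ) 1

abbrev Per {d : ℕ} (g : (Fin d → ℝ) → ℂ) : Prop :=
  ∀ (x : Fin d → ℝ) (k : Fin d → ℤ), g (x + fun i => (k i : ℝ)) = g x

noncomputable def pd {d : ℕ} (i : Fin d) (g : (Fin d → ℝ) → ℂ) : (Fin d → ℝ) → ℂ :=
  fun y => fderiv ℝ g y (Pi.single i 1)

noncomputable def lap {d : ℕ} (g : (Fin d → ℝ) → ℂ) : (Fin d → ℝ) → ℂ :=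
  fun x => ∑ i : Fin d, pd i (pd i g) x

noncomputable def ell {d : ℕ} (n : Fin d → ℤ) : (Fin d → ℝ) →L[ℝ] ℂ :=
  ∑ i : Fin d, (2 * Real.pi * Complex.I * (n i : ℂ)) •
    (Complex.ofRealCLM.comp (ContinuousLinearMap.proj (R := ℝ) (φ := fun _ : Fin d => ℝ) i))

lemma ell_apply {d : ℕ} (n : Fin d → ℤ) (x : Fin d → ℝ) :
    ell n x = ∑ i : Fin d, 2 * Real.pi * Complex.I * (n i : ℂ) * (x i : ℂ) := by
  simp [ell]

lemma ell_single {d : ℕ} (n : Fin d → ℤ) (i : Fin d) :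
    ell n (Pi.single i 1) = 2 * Real.pi * Complex.I * (n i : ℂ) := by
  rw [ell_apply, Finset.sum_eq_single i]
  · simp
  · intro j _ hj
    simp [Pi.single_eq_of_ne hj]
  · simp

lemma ell_norm {d : ℕ} (n : Fin d → ℤ) : ‖ell n‖ ≤ (2 * Real.pi * d) * ‖n‖ := by
  refine ContinuousLinearMap.opNorm_le_bound _ (by positivity) fun x => ?_
  rw [ell_apply]
  refine (norm_sum_le _ _).trans ?_
  have : ∀ i ∈ (Finset.univ : Finset (Fin d)),
      ‖2 * Real.pi * Complex.I * (n i : ℂ) * (x i : ℂ)‖ ≤ 2 * Real.pi * ‖n‖ * ‖x‖ := by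
    intro i _
    have h1 : ‖n i‖ ≤ ‖n‖ := norm_le_pi_norm n i
    have h2 : ‖x i‖ ≤ ‖x‖ := norm_le_pi_norm x i
    have h3 : ‖(n i : ℂ)‖ = ‖n i‖ := by simp [Int.norm_eq_abs]
    have hpi : |Real.pi| = Real.pi := abs_of_pos Real.pi_pos
    simp only [norm_mul, Complex.norm_I, h3, Complex.norm_real, Real.norm_eq_abs, hpi,
      Complex.norm_ofNat, mul_one] at *
    gcongr
  refine (Finset.sum_le_sum this).trans ?_
  simp
  linarith

noncomputable def E {d : ℕ} (n : Fin d → ℤ) (x : Fin d → ℝ) : ℂ := Complex.exp (ell n x)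

lemma E_norm {d : ℕ} (n : Fin d → ℤ) (x : Fin d → ℝ) : ‖E n x‖ = 1 := by
  have : ell n x = ((∑ i : Fin d, 2 * Real.pi * (n i : ℝ) * x i : ℝ) : ℂ) * Complex.I := by
    rw [ell_apply]; push_cast; rw [Finset.sum_mul]
    exact Finset.sum_congr rfl fun i _ => by ring
  rw [E, this, Complex.norm_exp_ofReal_mul_I]

lemma E_contDiff {d : ℕ} (n : Fin d → ℤ) {m : WithTop ℕ∞} : ContDiff ℝ m (E n) :=
  (ell n).contDiff.cexp

lemma E_hasFDerivAt {d : ℕ} (n : Fin d → ℤ) (x) : HasFDerivAt (E n) (E n x • ell n) x :=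
  (ell n).hasFDerivAt.cexp

lemma E_per {d : ℕ} (n : Fin d → ℤ) : Per (E n) := by
  intro x k
  rw [E, E, map_add, Complex.exp_add]
  have : ell n (fun i => (k i : ℝ)) = ((∑ i, n i * k i : ℤ) : ℂ) * (2 * Real.pi * Complex.I) := by
    rw [ell_apply]; push_cast; rw [Finset.sum_mul]
    exact Finset.sum_congr rfl fun i _ => by ring
  rw [this, Complex.exp_int_mul_two_pi_mul_I, mul_one]

lemma E_zero {d : ℕ} (x : Fin d → ℝ) : E 0 x = 1 := by simp [E, ell_apply]

lemma E_mul {d : ℕ} (m n : Fin d → ℤ) (x : Fin d → ℝ) : E m x * E n x = E (m + n) x := by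
  rw [E, E, E, ← Complex.exp_add]
  congr 1
  simp only [ell_apply, ← Finset.sum_add_distrib]
  exact Finset.sum_congr rfl fun i _ => by simp; ring

lemma E_iter {d : ℕ} (n : Fin d → ℤ) (k : ℕ) (x : Fin d → ℝ) :
    ‖iteratedFDeriv ℝ k (E n) x‖ ≤ ‖ell n‖ ^ k := by
  induction k with
  | zero => simp [E_norm]
  | succ k ih =>
    let g : ℂ →L[ℝ] ((Fin d → ℝ) →L[ℝ] ℂ) :=
      (ContinuousLinearMap.toSpanSingleton ℂ (ell n)).restrictScalars ℝ
    have hg : ‖g‖ ≤ ‖ell n‖ := by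
      refine ContinuousLinearMap.opNorm_le_bound _ (by positivity) fun z => ?_
      simp [g, norm_smul, mul_comm]
    have h : fderiv ℝ (E n) = g ∘ E n := by
      ext1 x
      rw [(E_hasFDerivAt n x).fderiv]
      simp [g]
    rw [← norm_iteratedFDeriv_fderiv, h]
    refine (g.norm_iteratedFDeriv_comp_left (n := k) (E_contDiff n (m := k)).contDiffAt le_rfl).trans ?_
    rw [pow_succ']
    gcongr

lemma cube_eq (d : ℕ) : cube d = Set.Icc (0 : Fin d → ℝ) 1 := by
  rw [← Set.pi_univ_Icc]; rfl

lemma cube_compact (d : ℕ) : IsCompact (cube d) := isCompact_univ_pi fun _ => isCompact_Icc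

lemma cube_vol (d : ℕ) : volume (cube d) = 1 := by
  rw [cube_eq, Real.volume_Icc_pi]; simp

lemma intCube {d : ℕ} {g : (Fin d → ℝ) → ℂ} (hg : Continuous g) : IntegrableOn g (cube d) :=
  hg.continuousOn.integrableOn_compact (cube_compact d)

lemma pd_contDiff {d : ℕ} {i : Fin d} {g : (Fin d → ℝ) → ℂ} (hg : ContDiff ℝ (⊤ : ℕ∞) g) :
    ContDiff ℝ (⊤ : ℕ∞) (pd i g) :=
  (hg.fderiv_right (m := (⊤ : ℕ∞)) (by simp)).clm_apply contDiff_const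

lemma pd_per {d : ℕ} {i : Fin d} {g : (Fin d → ℝ) → ℂ} (hg : Per g) : Per (pd i g) := by
  intro x k
  have : (fun y => g (y + fun i => (k i : ℝ))) = g := funext fun y => hg y k
  simp only [pd]
  rw [← fderiv_comp_add_right, this]

lemma lap_contDiff {d : ℕ} {g : (Fin d → ℝ) → ℂ} (hg : ContDiff ℝ (⊤ : ℕ∞) g) :
    ContDiff ℝ (⊤ : ℕ∞) (lap g) :=
  ContDiff.sum fun _ _ => pd_contDiff (pd_contDiff hg)

lemma lap_per {d : ℕ} {g : (Fin d → ℝ) → ℂ} (hg : Per g) : Per (lap g) := by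
  intro x k
  exact Finset.sum_congr rfl fun i _ => pd_per (pd_per hg) x k

lemma int_pd {d : ℕ} {i : Fin d} {g : (Fin d → ℝ) → ℂ} (hg : ContDiff ℝ (⊤ : ℕ∞) g)
    (hp : Per g) : ∫ x in cube d, pd i g x = 0 := by
  obtain _ | d := d
  · exact i.elim0
  have hd : ∀ x, HasFDerivAt g (fderiv ℝ g x) x := fun x =>
    (hg.differentiable (by simp) x).hasFDerivAt
  have hs : ∀ x, ∑ j : Fin (d+1), (if j = i then fderiv ℝ g x else 0) (Pi.single j 1)
      = pd i g x := by
    intro x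
    rw [Finset.sum_eq_single i]
    · simp [pd]
    · intro j _ hj; simp [hj]
    · simp
  have key := integral_divergence_of_hasFDerivAt_off_countable' (0 : Fin (d+1) → ℝ) 1
    (zero_le_one) (fun j => if j = i then g else 0)
    (fun j x => if j = i then fderiv ℝ g x else 0) ∅ Set.countable_empty
    (fun j => by
      split_ifs
      · exact hg.continuous.continuousOn
      · exact continuousOn_const)
    (fun x _ j => by
      by_cases h : j = i
      · simpa [h] using hd x
      · simp only [h, if_false]
        exact hasFDerivAt_const (0 : ℂ) x)
    (by
      simp only [hs]
      rw [← cube_eq]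
      exact intCube (pd_contDiff hg).continuous)
  simp only [hs] at key
  rw [cube_eq, key]
  refine Finset.sum_eq_zero fun j _ => ?_
  rw [sub_eq_zero]
  congr 1
  ext x
  split_ifs with h
  · symm
    rw [← hp _ (Pi.single j 1)]
    congr 1
    ext l
    refine Fin.succAboveCases j ?_ ?_ l
    · simp
    · intro l; simp
  · rfl

noncomputable def co {d : ℕ} (g : (Fin d → ℝ) → ℂ) (n : Fin d → ℤ) : ℂ :=
  ∫ x in cube d, E (-n) x * g x

lemma pd_E {d : ℕ} (n : Fin d → ℤ) (i : Fin d) (x) :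
    pd i (E n) x = 2 * Real.pi * Complex.I * (n i : ℂ) * E n x := by
  rw [pd, (E_hasFDerivAt n x).fderiv]
  simp [ell_single]; ring

lemma pd_mul {d : ℕ} {i : Fin d} {g h : (Fin d → ℝ) → ℂ} (hg : ContDiff ℝ (⊤ : ℕ∞) g)
    (hh : ContDiff ℝ (⊤ : ℕ∞) h) (x) :
    pd i (fun y => g y * h y) x = g x * pd i h x + pd i g x * h x := by
  simp only [pd]
  rw [fderiv_fun_mul (hg.differentiable (by simp) x) (hh.differentiable (by simp) x)]
  simp; ring

lemma co_pd {d : ℕ} {i : Fin d} {g : (Fin d → ℝ) → ℂ} (hg : ContDiff ℝ (⊤ : ℕ∞) g)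
    (hp : Per g) (n : Fin d → ℤ) :
    co (pd i g) n = 2 * Real.pi * Complex.I * (n i : ℂ) * co g n := by
  have h := int_pd (i := i) ((E_contDiff (-n)).mul hg) (fun x k => by rw [E_per, hp])
  have h2 : ∀ x, pd i (fun y => E (-n) y * g y) x = E (-n) x * pd i g x -
      2 * Real.pi * Complex.I * (n i : ℂ) * (E (-n) x * g x) := by
    intro x
    rw [pd_mul (E_contDiff _) hg, pd_E]; simp; ring
  simp only [h2] at h
  have c1 := (E_contDiff (-n) (m := 0)).continuous
  have i1 : IntegrableOn (fun x => E (-n) x * pd i g x) (cube d) :=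
    intCube (c1.mul (pd_contDiff hg).continuous)
  have i2 : IntegrableOn (fun x => E (-n) x * g x) (cube d) :=
    intCube (c1.mul hg.continuous)
  rw [integral_sub i1 (i2.const_mul _), integral_const_mul] at h
  exact sub_eq_zero.mp h

noncomputable def lam {d : ℕ} (n : Fin d → ℤ) : ℂ :=
  ∑ i, (2 * Real.pi * Complex.I * (n i : ℂ)) * (2 * Real.pi * Complex.I * (n i : ℂ))

lemma co_lap {d : ℕ} {g : (Fin d → ℝ) → ℂ} (hg : ContDiff ℝ (⊤ : ℕ∞) g)
    (hp : Per g) (n : Fin d → ℤ) : co (lap g) n = lam n * co g n := by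
  have c1 := (E_contDiff (-n) (m := 0)).continuous
  have : co (lap g) n = ∑ i, co (pd i (pd i g)) n := by
    simp only [co, lap, Finset.mul_sum]
    exact integral_finsetSum _ fun i _ =>
      intCube (c1.mul (pd_contDiff (pd_contDiff hg)).continuous)
  rw [this, lam, Finset.sum_mul]
  refine Finset.sum_congr rfl fun i _ => ?_
  rw [co_pd (pd_contDiff hg) (pd_per hp), co_pd hg hp]; ring

lemma lam_norm {d : ℕ} (n : Fin d → ℤ) : ‖n‖ ^ 2 ≤ ‖lam n‖ := by
  have h : lam n = ((-(4 * Real.pi ^ 2 * ∑ i, (n i : ℝ) ^ 2) : ℝ) : ℂ) := by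
    rw [lam]; push_cast; rw [Finset.mul_sum, ← Finset.sum_neg_distrib]
    refine Finset.sum_congr rfl fun i _ => ?_
    linear_combination (4 * Real.pi ^ 2 * (n i : ℂ) ^ 2) * Complex.I_sq
  rw [h, Complex.norm_real, norm_neg, Real.norm_eq_abs]
  have h0 : 0 ≤ ∑ i, (n i : ℝ) ^ 2 := Finset.sum_nonneg fun i _ => sq_nonneg _
  rw [abs_of_nonneg (by positivity)]
  have h1 : ‖n‖ ^ 2 ≤ ∑ i, (n i : ℝ) ^ 2 := by
    rw [← Real.le_sqrt (norm_nonneg _) h0]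
    refine (pi_norm_le_iff_of_nonneg (Real.sqrt_nonneg _)).2 fun i => ?_
    refine Real.le_sqrt_of_sq_le ?_
    rw [Int.norm_eq_abs, sq_abs]
    exact Finset.single_le_sum (f := fun i => (n i : ℝ) ^ 2) (fun i _ => sq_nonneg _)
      (Finset.mem_univ i)
  have h2 : 1 ≤ 4 * Real.pi ^ 2 := by nlinarith [Real.pi_gt_three]
  nlinarith

lemma co_bdd {d : ℕ} {g : (Fin d → ℝ) → ℂ} (hg : Continuous g) :
    ∃ C, ∀ n, ‖co g n‖ ≤ C := by
  refine ⟨∫ x in cube d, ‖g x‖, fun n => ?_⟩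
  refine (norm_integral_le_integral_norm _).trans (le_of_eq ?_)
  simp [E_norm]

lemma co_decay {d : ℕ} (k : ℕ) : ∀ {g : (Fin d → ℝ) → ℂ} (_ : ContDiff ℝ (⊤ : ℕ∞) g)
    (_ : Per g), ∃ C, ∀ n, ‖n‖ ^ (2 * k) * ‖co g n‖ ≤ C := by
  induction k with
  | zero => intro g hg _; simpa using co_bdd hg.continuous
  | succ k ih =>
    intro g hg hp
    obtain ⟨C, hC⟩ := ih (lap_contDiff hg) (lap_per hp)
    refine ⟨C, fun n => le_trans ?_ (hC n)⟩
    rw [co_lap hg hp, norm_mul, mul_add, pow_add, mul_assoc]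
    have := lam_norm n
    gcongr

lemma summ (d : ℕ) : Summable fun n : Fin d → ℤ => ‖n‖⁻¹ ^ (d + 1) := by
  let b := Pi.basisFun ℝ (Fin d)
  let L := Submodule.span ℤ (Set.range b)
  let b' := b.restrictScalars ℤ
  have hr : Module.finrank ℤ L = d := by
    rw [Module.finrank_eq_card_basis b']; simp
  have h := ZLattice.summable_norm_pow_inv L (d + 1) (by omega)
  rw [← b'.equivFun.symm.toEquiv.summable_iff] at h
  refine h.congr fun n => ?_
  have : ‖b'.equivFun.symm n‖ = ‖n‖ := by
    rw [Module.Basis.equivFun_symm_apply]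
    change ‖((∑ i, n i • b' i : L) : Fin d → ℝ)‖ = ‖n‖
    have h2 : ((∑ i, n i • b' i : L) : Fin d → ℝ) = fun i => (n i : ℝ) := by
      ext j
      simp [b', b, Pi.single_apply]
    rw [h2]
    simp only [Pi.norm_def, nnnorm, Int.norm_eq_abs, Real.norm_eq_abs]
  change ‖b'.equivFun.symm n‖⁻¹ ^ (d + 1) = _
  rw [this]

lemma co_sub {d : ℕ} {g h : (Fin d → ℝ) → ℂ} (hg : Continuous g) (hh : Continuous h)
    (n : Fin d → ℤ) : co (fun x => g x - h x) n = co g n - co h n := by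
  have c1 := (E_contDiff (-n) (m := 0)).continuous
  have i1 : IntegrableOn (fun x => E (-n) x * g x) (cube d) := intCube (c1.mul hg)
  have i2 : IntegrableOn (fun x => E (-n) x * h x) (cube d) := intCube (c1.mul hh)
  simp only [co, mul_sub]
  exact integral_sub i1 i2

lemma co_zero {d : ℕ} (g : (Fin d → ℝ) → ℂ) : co g 0 = ∫ x in cube d, g x := by
  simp [co, E_zero]

lemma mF_coe {d : ℕ} (n : Fin d → ℤ) (x : Fin d → ℝ) :
    UnitAddTorus.mFourier n (fun i => (x i : UnitAddCircle)) = E n x := by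
  simp only [UnitAddTorus.mFourier, ContinuousMap.coe_mk, E, ell_apply, Complex.exp_sum]
  refine Finset.prod_congr rfl fun i _ => ?_
  rw [fourier_coe_apply]; simp

lemma co_inj0 {d : ℕ} {g : (Fin d → ℝ) → ℂ} (hg : Continuous g) (hp : Per g)
    (h : ∀ n, co g n = 0) (x) : g x = 0 := by
  let p : (Fin d → ℝ) → UnitAddTorus (Fin d) := Pi.map fun _ => (fun t : ℝ => (t : UnitAddCircle))
  have hq : IsOpenQuotientMap p :=
    IsOpenQuotientMap.piMap fun _ => QuotientAddGroup.isOpenQuotientMap_mk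
  have hfac : ∀ x y, p x = p y → g x = g y := by
    intro x y hxy
    have : ∀ i, ∃ k : ℤ, (k : ℝ) = x i - y i := by
      intro i
      have h1 : ((x i : ℝ) : UnitAddCircle) = (y i : ℝ) := congrFun hxy i
      have h2 : ((x i - y i : ℝ) : UnitAddCircle) = 0 := by
        rw [AddCircle.coe_sub, h1, sub_self]
      obtain ⟨k, hk⟩ := AddCircle.coe_eq_zero_iff (p := (1 : ℝ)) |>.1 h2
      exact ⟨k, by simpa using hk⟩
    choose k hk using this
    rw [← hp y k]
    congr 1
    ext i
    simp [hk]
  let G0 : UnitAddTorus (Fin d) → ℂ := fun t => g (Function.surjInv hq.surjective t)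
  have hG0 : ∀ x, G0 (p x) = g x := fun x => hfac _ _ (Function.surjInv_eq hq.surjective _)
  have hcont : Continuous G0 := by
    rw [← hq.continuous_comp_iff]
    exact hg.congr fun x => (hG0 x).symm
  let G : C(UnitAddTorus (Fin d), ℂ) := ⟨G0, hcont⟩
  have hc : UnitAddTorus.mFourierCoeff G = 0 := by
    ext n
    rw [UnitAddTorus.mFourierCoeff_eq_integral G n 0]
    have hs : {x : Fin d → ℝ | ∀ i, x i ∈ Set.Ioc ((0 : Fin d → ℝ) i) ((0 : Fin d → ℝ) i + 1)}
        = Set.univ.pi fun i => Set.Ioc ((0 : Fin d → ℝ) i) ((1 : Fin d → ℝ) i) := by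
      ext x; simp [Set.mem_pi]
    have he : ∀ x : Fin d → ℝ, UnitAddTorus.mFourier (-n) (fun i => (x i : UnitAddCircle)) •
        G (fun i => (x i : UnitAddCircle)) = E (-n) x * g x := by
      intro x
      rw [mF_coe, smul_eq_mul]
      congr 1
      exact hG0 x
    simp only [he]
    rw [hs, volume_pi, setIntegral_congr_set Measure.univ_pi_Ioc_ae_eq_Icc, ← volume_pi, ← cube_eq]
    exact h n
  have hsum := UnitAddTorus.hasSum_mFourier_series_apply_of_summable (f := G)
    (by rw [hc]; exact summable_zero) (p x)
  rw [hc] at hsum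
  simp only [Pi.zero_apply, zero_smul] at hsum
  have := hsum.unique hasSum_zero
  rw [← hG0 x]
  exact this

lemma co_inj {d : ℕ} {g h : (Fin d → ℝ) → ℂ} (hg : Continuous g) (hp : Per g)
    (hh : Continuous h) (hp' : Per h) (e : ∀ n, co g n = co h n) : g = h := by
  ext x
  refine sub_eq_zero.1 (co_inj0 (g := fun x => g x - h x) (hg.sub hh)
    (fun x k => by simp only [hp x k, hp' x k]) (fun n => ?_) x)
  rw [co_sub hg hh, e, sub_self]

lemma int_E {d : ℕ} (n : Fin d → ℤ) (hn : n ≠ 0) : ∫ x in cube d, E n x = 0 := by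
  obtain ⟨i, hi⟩ := Function.ne_iff.1 hn
  have h := int_pd (i := i) (E_contDiff n) (E_per n)
  simp only [pd_E] at h
  rw [integral_const_mul] at h
  refine (mul_eq_zero.1 h).resolve_left ?_
  simp [Real.pi_ne_zero] at hi ⊢
  exact hi

lemma lam_ne {d : ℕ} {n : Fin d → ℤ} (hn : n ≠ 0) : lam n ≠ 0 := by
  have h1 := lam_norm n
  have h2 : 0 < ‖n‖ := norm_pos_iff.2 hn
  exact norm_pos_iff.1 (lt_of_lt_of_le (by positivity) h1)

lemma one_le_norm' {d : ℕ} {n : Fin d → ℤ} (hn : n ≠ 0) : 1 ≤ ‖n‖ := by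
  obtain ⟨i, hi⟩ := Function.ne_iff.1 hn
  refine le_trans ?_ (norm_le_pi_norm n i)
  rw [Int.norm_eq_abs]
  exact_mod_cast Int.one_le_abs hi

lemma lam_zero {d : ℕ} : lam (0 : Fin d → ℤ) = 0 := by simp [lam]

lemma summ_a {d : ℕ} {f : (Fin d → ℝ) → ℂ} (hf : ContDiff ℝ (⊤ : ℕ∞) f) (hp : Per f) (k : ℕ) :
    Summable fun n : Fin d → ℤ => ‖(lam n)⁻¹ * co f n‖ * ‖ell n‖ ^ k := by
  obtain ⟨C, hC⟩ := co_decay (k + d + 1) hf hp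
  refine Summable.of_nonneg_of_le (fun n => by positivity) (fun n => ?_)
    ((summ d).mul_left (C * (2 * Real.pi * d) ^ k))
  by_cases hn : n = 0
  · subst hn; simp [lam_zero]
  have h1 := one_le_norm' hn
  have hl : 1 ≤ ‖lam n‖ := le_trans (by nlinarith) (lam_norm n)
  have hi : ‖(lam n)⁻¹‖ ≤ 1 := by rw [norm_inv]; exact inv_le_one_of_one_le₀ hl
  have hb : ‖n‖ ^ k * ‖co f n‖ ≤ C * ‖n‖⁻¹ ^ (d + 1) := by
    rw [inv_pow, ← div_eq_mul_inv, le_div_iff₀ (by positivity)]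
    calc ‖n‖ ^ k * ‖co f n‖ * ‖n‖ ^ (d + 1) = ‖n‖ ^ (k + d + 1) * ‖co f n‖ := by ring
      _ ≤ ‖n‖ ^ (2 * (k + d + 1)) * ‖co f n‖ := by
        gcongr
        omega
      _ ≤ C := hC n
  calc ‖(lam n)⁻¹ * co f n‖ * ‖ell n‖ ^ k
      ≤ (1 * ‖co f n‖) * ((2 * Real.pi * d) * ‖n‖) ^ k := by
        rw [norm_mul]
        gcongr
        exact ell_norm n
    _ = (2 * Real.pi * d) ^ k * (‖n‖ ^ k * ‖co f n‖) := by rw [mul_pow]; ring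
    _ ≤ (2 * Real.pi * d) ^ k * (C * ‖n‖⁻¹ ^ (d + 1)) := by gcongr
    _ = _ := by ring

noncomputable def sol {d : ℕ} (f : (Fin d → ℝ) → ℂ) (x : Fin d → ℝ) : ℂ :=
  ∑' n : Fin d → ℤ, ((lam n)⁻¹ * co f n) * E n x

lemma sol_contDiff {d : ℕ} {f : (Fin d → ℝ) → ℂ} (hf : ContDiff ℝ (⊤ : ℕ∞) f) (hp : Per f) :
    ContDiff ℝ (⊤ : ℕ∞) (sol f) := by
  refine contDiff_tsum (v := fun k n => ‖(lam n)⁻¹ * co f n‖ * ‖ell n‖ ^ k)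
    (fun n => contDiff_const.mul (E_contDiff n)) (fun k _ => summ_a hf hp k) (fun k n x _ => ?_)
  have : (fun x => ((lam n)⁻¹ * co f n) * E n x) = ((lam n)⁻¹ * co f n) • E n := rfl
  rw [this, iteratedFDeriv_const_smul_apply (E_contDiff n).contDiffAt, norm_smul]
  gcongr
  exact E_iter n k x

lemma sol_per {d : ℕ} (f : (Fin d → ℝ) → ℂ) : Per (sol f) := by
  intro x k
  simp only [sol, E_per _ x k]

lemma co_sol {d : ℕ} {f : (Fin d → ℝ) → ℂ} (hf : ContDiff ℝ (⊤ : ℕ∞) f) (hp : Per f)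
    (m : Fin d → ℤ) : co (sol f) m = (lam m)⁻¹ * co f m := by
  have hcE : ∀ n : Fin d → ℤ, Continuous (E n) := fun n => (E_contDiff n (m := 0)).continuous
  have hc : ∀ n : Fin d → ℤ,
      Continuous fun x => E (-m) x * (((lam n)⁻¹ * co f n) * E n x) := fun n =>
    (hcE _).mul (continuous_const.mul (hcE n))
  have h := hasSum_integral_of_summable_integral_norm (μ := volume.restrict (cube d))
    (F := fun (n : Fin d → ℤ) x => E (-m) x * (((lam n)⁻¹ * co f n) * E n x))
    (fun n => intCube (hc n)) (by
      have := summ_a hf hp 0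
      simp only [pow_zero, mul_one] at this
      refine this.congr fun n => ?_
      simp only [norm_mul, E_norm, one_mul, mul_one]
      rw [setIntegral_const, Measure.real, cube_vol]
      simp)
  have h2 : ∀ n : Fin d → ℤ, (∫ x in cube d, E (-m) x * (((lam n)⁻¹ * co f n) * E n x))
      = if n = m then (lam m)⁻¹ * co f m else 0 := by
    intro n
    have h3 : ∀ x, E (-m) x * (((lam n)⁻¹ * co f n) * E n x)
        = ((lam n)⁻¹ * co f n) * E (-m + n) x := by
      intro x; rw [← E_mul]; ring
    simp only [h3]
    rw [integral_const_mul]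
    split_ifs with hnm
    · subst hnm
      simp only [neg_add_cancel, E_zero]
      rw [setIntegral_const, Measure.real, cube_vol]
      simp
    · rw [int_E, mul_zero]
      intro h0
      exact hnm (neg_add_eq_zero.1 h0).symm
  simp only [h2, tsum_mul_left] at h
  have h4 := h.unique (hasSum_ite_eq m _)
  exact h4

end PT

open PT in
theorem stmt12 (d : ℕ) (hd : 1 ≤ d) (f : (Fin d → ℝ) → ℂ)
    (hf : ContDiff ℝ (⊤ : ℕ∞) f)
    (hper : ∀ (x : Fin d → ℝ) (k : Fin d → ℤ), f (x + fun i => (k i : ℝ)) = f x)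
    (hmean : ∫ x in Set.univ.pi fun _ : Fin d => Set.Icc (0 : ℝ) 1, f x = 0) :
    ∃! u : (Fin d → ℝ) → ℂ,
      ContDiff ℝ (⊤ : ℕ∞) u ∧
      (∀ (x : Fin d → ℝ) (k : Fin d → ℤ), u (x + fun i => (k i : ℝ)) = u x) ∧
      (∫ x in Set.univ.pi fun _ : Fin d => Set.Icc (0 : ℝ) 1, u x) = 0 ∧
      ∀ x : Fin d → ℝ,
        (∑ i : Fin d, fderiv ℝ (fun y => fderiv ℝ u y (Pi.single i 1)) x (Pi.single i 1))
          = f x := by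
  have hs := sol_contDiff hf hper
  have h0 : co f 0 = 0 := (co_zero f).trans hmean
  refine ⟨sol f, ⟨hs, sol_per f, ?_, fun x => ?_⟩, ?_⟩
  · have := (co_zero (sol f)).symm.trans (co_sol hf hper 0)
    rw [h0, mul_zero] at this
    exact this
  · have : lap (sol f) = f := by
      refine co_inj (lap_contDiff hs).continuous (lap_per (sol_per f)) hf.continuous hper
        fun n => ?_
      rw [co_lap hs (sol_per f), co_sol hf hper]
      by_cases hn : n = 0
      · subst hn; rw [h0]; simp
      · rw [mul_inv_cancel_left₀ (lam_ne hn)]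
    exact congrFun this x
  · rintro v ⟨hv, hvp, hvm, hvl⟩
    have hl : lap v = f := funext hvl
    refine co_inj hv.continuous hvp hs.continuous (sol_per f) fun n => ?_
    rw [co_sol hf hper]
    by_cases hn : n = 0
    · subst hn; rw [h0, mul_zero]; exact (co_zero v).trans hvm
    · rw [← hl, co_lap hv hvp, inv_mul_cancel_left₀ (lam_ne hn)]
end
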